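/- arXiv:1604.03089 — 2 statements merged into one kernel-verified Lean document; each statement's English description precedes it below -/
import Mathlib

section
/- Let f : (0,∞) → ℝ be operator convex. (1) For all positive semidefinite ρ, σ ∈ M_n(ℂ), the limit Ŝ_f(ρ‖σ) := lim_{ε→0⁺} Tr( (σ+εI)^{1/2} f( (σ+εI)^{−1/2} (ρ+εI) (σ+εI)^{−1/2} ) (σ+εI)^{1/2} ) exists in (−∞, +∞] (i.e., as ε → 0⁺ the expression either converges to a real number or tends to +∞). (2) The resulting maximal f-divergence is jointly convex: for positive semidefinite ρ_i, σ_i ∈ M_n(ℂ) and weights λ_i ≥ 0 (i = 1,…,k), Ŝ_f( Σ_i λ_i ρ_i ‖ Σ_i λ_i σ_i ) ≤ Σ_i λ_i Ŝ_f(ρ_i‖σ_i), the inequality understood in (−∞, +∞]. -/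
open Matrix Filter
open scoped ComplexOrder

/-- Moore–Penrose power of a matrix: apply `x ↦ x ^ t` to the nonzero eigenvalues
(with `0 ^ t := 0`) via the continuous functional calculus. -/
noncomputable def mpow {n : ℕ} (A : Matrix (Fin n) (Fin n) ℂ) (t : ℝ) :
    Matrix (Fin n) (Fin n) ℂ :=
  cfc (fun x : ℝ => if x = 0 then 0 else x ^ t) A

/-- `f : (0,∞) → ℝ` is operator convex. -/
def OperatorConvexOn (f : ℝ → ℝ) : Prop :=
  ∀ (m : ℕ) (A B : Matrix (Fin m) (Fin m) ℂ), A.PosDef → B.PosDef →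
    ∀ t : ℝ, 0 ≤ t → t ≤ 1 →
      (t • cfc f A + (1 - t) • cfc f B - cfc f (t • A + (1 - t) • B)).PosSemidef

/-- The ε-regularized maximal `f`-divergence
`Tr((σ+εI)^{1/2} f((σ+εI)^{-1/2}(ρ+εI)(σ+εI)^{-1/2}) (σ+εI)^{1/2})`. -/
noncomputable def maxSfEps {n : ℕ} (f : ℝ → ℝ) (ρ σ : Matrix (Fin n) (Fin n) ℂ)
    (ε : ℝ) : ℝ :=
  (Matrix.trace (mpow (σ + ε • 1) (1/2) *
    cfc f (mpow (σ + ε • 1) (-(1/2)) * (ρ + ε • 1) * mpow (σ + ε • 1) (-(1/2))) *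
    mpow (σ + ε • 1) (1/2))).re

/-- The maximal `f`-divergence of positive semidefinite matrices, defined as the limit
(realized as a `limsup` in `EReal`, which agrees with the limit whenever it exists)
of the ε-regularizations as `ε → 0⁺`. -/
noncomputable def hatSf {n : ℕ} (f : ℝ → ℝ) (ρ σ : Matrix (Fin n) (Fin n) ℂ) : EReal :=
  Filter.limsup (fun ε : ℝ => ((maxSfEps f ρ σ ε : ℝ) : EReal))
    (nhdsWithin 0 (Set.Ioi 0))

lemma cont_spec {n : ℕ} (f : ℝ → ℝ) (A : Matrix (Fin n) (Fin n) ℂ) :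
    ContinuousOn f (spectrum ℝ A) :=
  (Matrix.finite_real_spectrum (A := A)).continuousOn f

lemma cfc_herm {n : ℕ} (f : ℝ → ℝ) (A : Matrix (Fin n) (Fin n) ℂ) : (cfc f A).IsHermitian :=
  cfc_predicate f A

lemma intertw {m n : ℕ} (f : ℝ → ℝ) (X : Matrix (Fin m) (Fin m) ℂ) (Y : Matrix (Fin n) (Fin n) ℂ)
    (V : Matrix (Fin m) (Fin n) ℂ) (hX : X.IsHermitian) (hY : Y.IsHermitian)
    (h : X * V = V * Y) : cfc f X * V = V * cfc f Y := by
  classical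
  set s : Finset ℝ := (Matrix.finite_real_spectrum (A := X)).toFinset ∪
    (Matrix.finite_real_spectrum (A := Y)).toFinset with hs
  set q : Polynomial ℝ := Lagrange.interpolate s id f with hq
  have hqe : ∀ x ∈ s, q.eval x = f x := fun x hx => by
    have := Lagrange.eval_interpolate_at_node f (s := s) (v := id) (Set.injOn_id _) hx
    simpa only [id, hq] using this
  have h1 : cfc f X = Polynomial.aeval X q := by
    rw [← cfc_polynomial q X hX]
    exact cfc_congr fun x hx => (hqe x (by simp [hs, hx])).symm
  have h2 : cfc f Y = Polynomial.aeval Y q := by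
    rw [← cfc_polynomial q Y hY]
    exact cfc_congr fun x hx => (hqe x (by simp [hs, hx])).symm
  rw [h1, h2]
  clear h1 h2 hqe
  clear_value q
  clear hq
  induction q using Polynomial.induction_on' with
  | add p q hp hq => simp [Matrix.add_mul, Matrix.mul_add, hp, hq]
  | monomial k a =>
    have hk : X ^ k * V = V * Y ^ k := by
      induction k with
      | zero => simp
      | succ k ih => rw [pow_succ, Matrix.mul_assoc, h, ← Matrix.mul_assoc, ih, Matrix.mul_assoc,
          ← pow_succ]
    simp [Polynomial.aeval_monomial, Algebra.algebraMap_eq_smul_one, hk]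

lemma jensen_iso {m n : ℕ} (f : ℝ → ℝ) (hf : OperatorConvexOn f)
    (X : Matrix (Fin m) (Fin m) ℂ) (hX : X.PosDef) (V : Matrix (Fin m) (Fin n) ℂ)
    (hV : Vᴴ * V = 1) :
    (Vᴴ * cfc f X * V - cfc f (Vᴴ * X * V)).PosSemidef := by
  set Z : Matrix (Fin m) (Fin m) ℂ := (2 : ℝ) • (V * Vᴴ) - 1 with hZ
  have hZV : Z * V = V := by
    rw [hZ, Matrix.sub_mul, Matrix.smul_mul, Matrix.mul_assoc, hV, Matrix.mul_one, Matrix.one_mul,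
      two_smul, add_sub_cancel_right]
  have hZH : Zᴴ = Z := by
    simp [hZ, Matrix.conjTranspose_sub, Matrix.conjTranspose_smul, Matrix.conjTranspose_mul]
  have hVZ : Vᴴ * Z = Vᴴ := by
    have := congrArg Matrix.conjTranspose hZV
    rwa [Matrix.conjTranspose_mul, hZH] at this
  have hZZ : Z * Z = 1 := by
    nth_rewrite 2 [hZ]
    rw [Matrix.mul_sub, Matrix.mul_smul, ← Matrix.mul_assoc, hZV, Matrix.mul_one, hZ]
    abel
  have hXH := hX.isHermitian
  have hY : (Z * X * Z).PosDef := by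
    have := hX.conjTranspose_mul_mul_same (B := Z)
      (Matrix.mulVec_injective_of_isUnit (IsUnit.of_mul_eq_one Z hZZ))
    rwa [hZH] at this
  have hfY : cfc f (Z * X * Z) = Z * cfc f X * Z := by
    have := intertw f X (Z * X * Z) Z hXH hY.isHermitian (by
      rw [Matrix.mul_assoc Z X Z, ← Matrix.mul_assoc Z Z, hZZ, Matrix.one_mul])
    rw [Matrix.mul_assoc Z (cfc f X) Z, this, ← Matrix.mul_assoc, hZZ, Matrix.one_mul]
  have hc := hf m X (Z * X * Z) hX hY (1/2) (by norm_num) (by norm_num)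
  set M := (1/2 : ℝ) • X + (1 - 1/2 : ℝ) • (Z * X * Z) with hM
  have hMH : M.IsHermitian := by
    rw [hM]
    unfold Matrix.IsHermitian
    simp [Matrix.conjTranspose_add, Matrix.conjTranspose_smul, hXH.eq, hZH, Matrix.mul_assoc]
  have hMV : M * V = V * (Vᴴ * X * V) := by
    rw [hM, Matrix.add_mul, Matrix.smul_mul, Matrix.smul_mul, Matrix.mul_assoc _ Z V, hZV,
      Matrix.mul_assoc Z, hZ, Matrix.sub_mul, Matrix.smul_mul, Matrix.one_mul, smul_sub, smul_smul]
    norm_num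
    simp only [Matrix.mul_assoc]
  have hfM := intertw f M (Vᴴ * X * V) V hMH (by
    unfold Matrix.IsHermitian
    simp [Matrix.conjTranspose_mul, hXH.eq, Matrix.mul_assoc]) hMV
  have hres := hc.conjTranspose_mul_mul_same V
  convert hres using 1
  rw [hfY, Matrix.mul_assoc, Matrix.mul_assoc Vᴴ (_ - _) V,
    Matrix.sub_mul _ (cfc f M) V, hfM, Matrix.mul_sub, ← Matrix.mul_assoc Vᴴ V (cfc f _), hV,
    Matrix.one_mul, Matrix.add_mul, Matrix.smul_mul, Matrix.smul_mul, Matrix.mul_assoc _ Z V,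
    hZV, Matrix.mul_add, Matrix.mul_smul, Matrix.mul_smul, Matrix.mul_assoc Z, ← Matrix.mul_assoc Vᴴ Z,
    hVZ, ← add_smul]
  norm_num [Matrix.mul_assoc]

lemma exists_incl (n : ℕ) : ∃ J₁ J₂ : Matrix (Fin (n + n)) (Fin n) ℂ,
    J₁ᴴ * J₁ = 1 ∧ J₂ᴴ * J₂ = 1 ∧ J₁ᴴ * J₂ = 0 ∧ J₂ᴴ * J₁ = 0 ∧ J₁ * J₁ᴴ + J₂ * J₂ᴴ = 1 := by
  refine ⟨(Matrix.fromRows (1 : Matrix (Fin n) (Fin n) ℂ) (0 : Matrix (Fin n) (Fin n) ℂ)).submatrix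
    finSumFinEquiv.symm id, (Matrix.fromRows (0 : Matrix (Fin n) (Fin n) ℂ)
    (1 : Matrix (Fin n) (Fin n) ℂ)).submatrix finSumFinEquiv.symm id, ?_, ?_, ?_, ?_, ?_⟩
  all_goals simp only [Matrix.conjTranspose_submatrix, Matrix.submatrix_mul_equiv,
    Matrix.conjTranspose_fromRows_eq_fromCols_conjTranspose, Matrix.fromCols_mul_fromRows]
  · simp
  · simp
  · simp
  · simp
  · rw [← Matrix.submatrix_mul _ _ _ id _ Function.bijective_id,
      ← Matrix.submatrix_mul _ _ _ id _ Function.bijective_id,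
      Matrix.fromRows_mul_fromCols, Matrix.fromRows_mul_fromCols]
    refine (congrFun (congrFun (Matrix.submatrix_add _ _) _) _).symm.trans ?_
    simp [Matrix.fromBlocks_add, Matrix.fromBlocks_one]

lemma jensen {n : ℕ} (f : ℝ → ℝ) (hf : OperatorConvexOn f)
    (A B V W : Matrix (Fin n) (Fin n) ℂ) (hA : A.PosDef) (hB : B.PosDef)
    (hVW : Vᴴ * V + Wᴴ * W = 1) :
    (Vᴴ * cfc f A * V + Wᴴ * cfc f B * W - cfc f (Vᴴ * A * V + Wᴴ * B * W)).PosSemidef := by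
  obtain ⟨J, K, hJJ, hKK, hJK, hKJ, hs⟩ := exists_incl n
  have rJJ : ∀ {l : ℕ} (C : Matrix (Fin n) (Fin l) ℂ), Jᴴ * (J * C) = C := fun C => by
    rw [← Matrix.mul_assoc, hJJ, Matrix.one_mul]
  have rKK : ∀ {l : ℕ} (C : Matrix (Fin n) (Fin l) ℂ), Kᴴ * (K * C) = C := fun C => by
    rw [← Matrix.mul_assoc, hKK, Matrix.one_mul]
  have rJK : ∀ {l : ℕ} (C : Matrix (Fin n) (Fin l) ℂ), Jᴴ * (K * C) = 0 := fun C => by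
    rw [← Matrix.mul_assoc, hJK, Matrix.zero_mul]
  have rKJ : ∀ {l : ℕ} (C : Matrix (Fin n) (Fin l) ℂ), Kᴴ * (J * C) = 0 := fun C => by
    rw [← Matrix.mul_assoc, hKJ, Matrix.zero_mul]
  set X := J * A * Jᴴ + K * B * Kᴴ with hX
  have hXpd : X.PosDef := by
    have h0 : X.PosSemidef := (hA.posSemidef.mul_mul_conjTranspose_same J).add
      (hB.posSemidef.mul_mul_conjTranspose_same K)
    rw [h0.posDef_iff_isUnit]
    refine IsUnit.of_mul_eq_one (J * A⁻¹ * Jᴴ + K * B⁻¹ * Kᴴ) ?_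
    have hA' : ∀ {l : ℕ} (C : Matrix (Fin n) (Fin l) ℂ), A * (A⁻¹ * C) = C := fun C => by
      rw [← Matrix.mul_assoc, Matrix.mul_nonsing_inv _ ((Matrix.isUnit_iff_isUnit_det _).1 hA.isUnit),
        Matrix.one_mul]
    have hB' : ∀ {l : ℕ} (C : Matrix (Fin n) (Fin l) ℂ), B * (B⁻¹ * C) = C := fun C => by
      rw [← Matrix.mul_assoc, Matrix.mul_nonsing_inv _ ((Matrix.isUnit_iff_isUnit_det _).1 hB.isUnit),
        Matrix.one_mul]
    simp [hX, Matrix.add_mul, Matrix.mul_add, Matrix.mul_assoc, rJJ, rKK, rJK, rKJ, hA', hB', hs]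
  have hXJ : X * J = J * A := by
    simp [hX, Matrix.add_mul, Matrix.mul_assoc, hJJ, hKJ]
  have hXK : X * K = K * B := by
    simp [hX, Matrix.add_mul, Matrix.mul_assoc, hKK, hJK]
  have fJ := intertw f X A J hXpd.isHermitian hA.isHermitian hXJ
  have fK := intertw f X B K hXpd.isHermitian hB.isHermitian hXK
  have rX : ∀ C : Matrix (Fin n) (Fin n) ℂ, X * (J * C) = J * (A * C) := fun C => by
    rw [← Matrix.mul_assoc, hXJ, Matrix.mul_assoc]
  have rX' : ∀ C : Matrix (Fin n) (Fin n) ℂ, X * (K * C) = K * (B * C) := fun C => by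
    rw [← Matrix.mul_assoc, hXK, Matrix.mul_assoc]
  have rf : ∀ C : Matrix (Fin n) (Fin n) ℂ, cfc f X * (J * C) = J * (cfc f A * C) := fun C => by
    rw [← Matrix.mul_assoc, fJ, Matrix.mul_assoc]
  have rf' : ∀ C : Matrix (Fin n) (Fin n) ℂ, cfc f X * (K * C) = K * (cfc f B * C) := fun C => by
    rw [← Matrix.mul_assoc, fK, Matrix.mul_assoc]
  have := jensen_iso f hf X hXpd (J * V + K * W) (by
    simp [Matrix.conjTranspose_add, Matrix.conjTranspose_mul, Matrix.add_mul, Matrix.mul_add,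
      Matrix.mul_assoc, rJJ, rKK, rJK, rKJ, hVW])
  clear_value X
  simpa [Matrix.conjTranspose_add, Matrix.conjTranspose_mul, Matrix.add_mul, Matrix.mul_add,
      Matrix.mul_assoc, rJJ, rKK, rJK, rKJ, rX, rX', rf, rf'] using this

lemma spec_pos {n : ℕ} {A : Matrix (Fin n) (Fin n) ℂ} (hA : A.PosDef) {x : ℝ}
    (hx : x ∈ spectrum ℝ A) : 0 < x := by
  rw [hA.isHermitian.spectrum_real_eq_range_eigenvalues] at hx
  obtain ⟨i, rfl⟩ := hx
  exact hA.eigenvalues_pos i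

lemma mpow_mul {n : ℕ} {A : Matrix (Fin n) (Fin n) ℂ} (hA : A.PosDef) (s t : ℝ) :
    mpow A s * mpow A t = mpow A (s + t) := by
  unfold mpow
  rw [← cfc_mul _ _ A (cont_spec _ _) (cont_spec _ _)]
  refine cfc_congr fun x hx => ?_
  have := spec_pos hA hx
  simp [this.ne', Real.rpow_add this]

lemma mpow_one' {n : ℕ} {A : Matrix (Fin n) (Fin n) ℂ} (hA : A.PosDef) : mpow A 1 = A := by
  unfold mpow
  conv_rhs => rw [← cfc_id ℝ A hA.isHermitian]
  refine cfc_congr fun x hx => ?_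
  have := spec_pos hA hx
  simp [this.ne']

lemma mpow_zero' {n : ℕ} {A : Matrix (Fin n) (Fin n) ℂ} (hA : A.PosDef) : mpow A 0 = 1 := by
  unfold mpow
  rw [← cfc_one ℝ A hA.isHermitian]
  refine cfc_congr fun x hx => ?_
  have := spec_pos hA hx
  simp [this.ne']

lemma mpow_smul {n : ℕ} {A : Matrix (Fin n) (Fin n) ℂ} (hA : A.PosDef) {c : ℝ} (hc : 0 < c)
    (t : ℝ) : mpow (c • A) t = c ^ t • mpow A t := by
  unfold mpow
  rw [← cfc_smul _ _ A (cont_spec _ _)]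
  refine (cfc_comp_const_mul c (fun x : ℝ => if x = 0 then 0 else x ^ t) A
    (((Matrix.finite_real_spectrum (A := A)).image _).continuousOn _) hA.isHermitian).symm.trans ?_
  refine cfc_congr fun x hx => ?_
  have := spec_pos hA hx
  simp [this.ne', hc.ne', Real.mul_rpow hc.le this.le]

/-- trace perspective -/
noncomputable def persp {n : ℕ} (f : ℝ → ℝ) (A B : Matrix (Fin n) (Fin n) ℂ) : ℝ :=
  (Matrix.trace (mpow B (1/2) * cfc f (mpow B (-(1/2)) * A * mpow B (-(1/2))) * mpow B (1/2))).re

lemma maxSfEps_eq {n : ℕ} (f : ℝ → ℝ) (ρ σ : Matrix (Fin n) (Fin n) ℂ) (ε : ℝ) :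
    maxSfEps f ρ σ ε = persp f (ρ + ε • 1) (σ + ε • 1) := rfl

lemma persp_smul {n : ℕ} (f : ℝ → ℝ) (A B : Matrix (Fin n) (Fin n) ℂ) (hB : B.PosDef)
    {c : ℝ} (hc : 0 < c) : persp f (c • A) (c • B) = c * persp f A B := by
  unfold persp
  have h1 : c ^ (-(1/2) : ℝ) * (c * c ^ (-(1/2) : ℝ)) = 1 := by
    nth_rewrite 2 [← Real.rpow_one c]
    rw [← Real.rpow_add hc, ← Real.rpow_add hc]; norm_num
  have h2 : c ^ (1/2 : ℝ) * c ^ (1/2 : ℝ) = c := by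
    rw [← Real.rpow_add hc]; norm_num
  simp only [mpow_smul hB hc, Matrix.smul_mul, Matrix.mul_smul, smul_smul]
  rw [show c ^ (-(1/2) : ℝ) * (c * c ^ (-(1/2) : ℝ)) = 1 from h1, one_smul, h2]
  simp [Matrix.trace_smul]

lemma persp_add {n : ℕ} (f : ℝ → ℝ) (hf : OperatorConvexOn f)
    (A₁ A₂ B₁ B₂ : Matrix (Fin n) (Fin n) ℂ)
    (hA₁ : A₁.PosDef) (hA₂ : A₂.PosDef) (hB₁ : B₁.PosDef) (hB₂ : B₂.PosDef) :
    persp f (A₁ + A₂) (B₁ + B₂) ≤ persp f A₁ B₁ + persp f A₂ B₂ := by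
  have hB := hB₁.add hB₂
  set B := B₁ + B₂ with hBdef
  have key : ∀ {B : Matrix (Fin n) (Fin n) ℂ}, B.PosDef →
      mpow B (1/2) * mpow B (1/2) = B ∧ mpow B (1/2) * mpow B (-(1/2)) = 1 ∧
      mpow B (-(1/2)) * mpow B (1/2) = 1 := fun {B} h => by
    refine ⟨?_, ?_, ?_⟩
    · rw [mpow_mul h]; norm_num [mpow_one' h]
    · rw [mpow_mul h]; norm_num [mpow_zero' h]
    · rw [mpow_mul h]; norm_num [mpow_zero' h]
  have hH : ∀ (B : Matrix (Fin n) (Fin n) ℂ) (t : ℝ), (mpow B t)ᴴ = mpow B t :=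
    fun B t => (cfc_herm _ B).eq
  unfold persp
  obtain ⟨a1, a2, a3⟩ := key hB
  obtain ⟨b1, b2, b3⟩ := key hB₁
  obtain ⟨c1, c2, c3⟩ := key hB₂
  have pd : ∀ {A B : Matrix (Fin n) (Fin n) ℂ}, A.PosDef → B.PosDef →
      (mpow B (-(1/2)) * A * mpow B (-(1/2))).PosDef := fun {A B} hA hB => by
    have := hA.conjTranspose_mul_mul_same (B := mpow B (-(1/2)))
      (Matrix.mulVec_injective_of_isUnit (IsUnit.of_mul_eq_one _ (key hB).2.2))
    rwa [hH] at this
  have p1 := pd hA₁ hB₁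
  have p2 := pd hA₂ hB₂
  have s1 := hH B (1/2)
  have t1 := hH B (-(1/2))
  have s2 := hH B₁ (1/2)
  have s3 := hH B₂ (1/2)
  generalize mpow B (1/2) = S at *
  generalize mpow B (-(1/2)) = T at *
  generalize mpow B₁ (1/2) = S₁ at *
  generalize mpow B₁ (-(1/2)) = T₁ at *
  generalize mpow B₂ (1/2) = S₂ at *
  generalize mpow B₂ (-(1/2)) = T₂ at *
  have j := jensen f hf _ _ (S₁ * T) (S₂ * T) p1 p2 (by
    rw [Matrix.conjTranspose_mul, Matrix.conjTranspose_mul, s2, s3, t1,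
      show T * S₁ * (S₁ * T) + T * S₂ * (S₂ * T) = T * (S₁ * S₁ + S₂ * S₂) * T by noncomm_ring,
      b1, c1, ← hBdef, ← a1, ← Matrix.mul_assoc, a3, Matrix.one_mul, a2])
  rw [Matrix.conjTranspose_mul, Matrix.conjTranspose_mul, s2, s3, t1] at j
  have e : T * S₁ * (T₁ * A₁ * T₁) * (S₁ * T) + T * S₂ * (T₂ * A₂ * T₂) * (S₂ * T)
      = T * (A₁ + A₂) * T := by
    rw [show T * S₁ * (T₁ * A₁ * T₁) * (S₁ * T) + T * S₂ * (T₂ * A₂ * T₂) * (S₂ * T)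
      = T * ((S₁ * T₁) * A₁ * (T₁ * S₁) + (S₂ * T₂) * A₂ * (T₂ * S₂)) * T by noncomm_ring,
      b2, b3, c2, c3]
    simp
  rw [e] at j
  have k := j.conjTranspose_mul_mul_same S
  rw [s1] at k
  generalize cfc f (T * (A₁ + A₂) * T) = F at *
  generalize cfc f (T₁ * A₁ * T₁) = F₁ at *
  generalize cfc f (T₂ * A₂ * T₂) = F₂ at *
  have e2 : S * (T * S₁ * F₁ * (S₁ * T) + T * S₂ * F₂ * (S₂ * T) - F) * S
      = S₁ * F₁ * S₁ + S₂ * F₂ * S₂ - S * F * S := by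
    rw [show S * (T * S₁ * F₁ * (S₁ * T) + T * S₂ * F₂ * (S₂ * T) - F) * S
      = (S * T) * (S₁ * F₁ * S₁ + S₂ * F₂ * S₂) * (T * S) - S * F * S by noncomm_ring, a2, a3]
    simp
  rw [e2] at k
  have := (Complex.le_def.1 k.trace_nonneg).1
  simp [Matrix.trace_sub, Matrix.trace_add] at this
  linarith

lemma pd_eps {n : ℕ} {ρ : Matrix (Fin n) (Fin n) ℂ} (h : ρ.PosSemidef) {ε : ℝ} (hε : 0 < ε) :
    (ρ + ε • 1).PosDef :=
  Matrix.PosDef.posSemidef_add h (Matrix.PosDef.one.smul hε)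

lemma eps_le {n : ℕ} (f : ℝ → ℝ) (hf : OperatorConvexOn f) (ρ σ : Matrix (Fin n) (Fin n) ℂ)
    (hρ : ρ.PosSemidef) (hσ : σ.PosSemidef) {ε δ : ℝ} (hε : 0 < ε) (hδ : ε < δ) :
    maxSfEps f ρ σ δ ≤ maxSfEps f ρ σ ε + (δ - ε) * persp f (1 : Matrix (Fin n) (Fin n) ℂ) 1 := by
  have hd : 0 < δ - ε := by linarith
  have p1 : ((δ - ε) • (1 : Matrix (Fin n) (Fin n) ℂ)).PosDef := Matrix.PosDef.one.smul hd
  have := persp_add f hf _ _ _ _ (pd_eps hρ hε) p1 (pd_eps hσ hε) p1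
  rw [persp_smul f _ _ Matrix.PosDef.one hd, add_assoc, add_assoc, ← add_smul] at this
  simpa [maxSfEps_eq] using this

lemma part1 {n : ℕ} (f : ℝ → ℝ) (hf : OperatorConvexOn f) (ρ σ : Matrix (Fin n) (Fin n) ℂ)
    (hρ : ρ.PosSemidef) (hσ : σ.PosSemidef) :
    Filter.Tendsto (fun ε : ℝ => ((maxSfEps f ρ σ ε : ℝ) : EReal))
          (nhdsWithin 0 (Set.Ioi 0)) (nhds (hatSf f ρ σ))
        ∧ hatSf f ρ σ ≠ ⊥ := by
  set c := persp f (1 : Matrix (Fin n) (Fin n) ℂ) 1 with hc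
  set h : ℝ → EReal := fun ε => ((maxSfEps f ρ σ ε - ε * c : ℝ) : EReal) with hh
  have anti : AntitoneOn h (Set.Ioi 0) := by
    intro a ha b hb hab
    rcases hab.eq_or_lt with rfl | hlt
    · exact le_rfl
    have := eps_le f hf ρ σ hρ hσ ha hlt
    simp only [hh]
    rw [EReal.coe_le_coe_iff]
    linarith
  have ht := anti.tendsto_nhdsGT (OrderTop.bddAbove _)
  set L := sSup (h '' Set.Ioi 0) with hL
  have hLbot : L ≠ ⊥ := by
    have : h 1 ≤ L := le_sSup ⟨1, by simp, rfl⟩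
    intro hb
    rw [hb, le_bot_iff] at this
    exact EReal.coe_ne_bot _ this
  have ht2 : Tendsto (fun ε : ℝ => ((ε * c : ℝ) : EReal)) (nhdsWithin 0 (Set.Ioi 0))
      (nhds ((0 : ℝ) : EReal)) := by
    refine (continuous_coe_real_ereal.tendsto 0).comp ?_
    have : Tendsto (fun ε : ℝ => ε * c) (nhds 0) (nhds (0 * c)) :=
      (continuous_id.mul continuous_const).tendsto 0
    rw [zero_mul] at this
    exact this.mono_left nhdsWithin_le_nhds
  have ht3 : Tendsto (fun ε : ℝ => ((maxSfEps f ρ σ ε : ℝ) : EReal))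
      (nhdsWithin 0 (Set.Ioi 0)) (nhds L) := by
    have := (EReal.continuousAt_add (p := (L, ((0 : ℝ) : EReal))) (Or.inr (EReal.coe_ne_bot _))
      (Or.inl hLbot)).tendsto.comp (ht.prodMk_nhds ht2)
    simp only [EReal.coe_zero, add_zero] at this
    refine this.congr fun ε => ?_
    simp only [Function.comp, hh]
    rw [← EReal.coe_add, sub_add_cancel]
  have : hatSf f ρ σ = L := ht3.limsup_eq
  rw [this]
  exact ⟨ht3, hLbot⟩

lemma tendsto_mul_pos {c : ℝ} (hc : 0 < c) :
    Tendsto (fun ε : ℝ => c * ε) (nhdsWithin 0 (Set.Ioi 0)) (nhdsWithin 0 (Set.Ioi 0)) := by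
  refine tendsto_nhdsWithin_iff.2 ⟨?_, ?_⟩
  · have : Tendsto (fun ε : ℝ => c * ε) (nhds 0) (nhds (c * 0)) :=
      (continuous_const.mul continuous_id).tendsto 0
    rw [mul_zero] at this
    exact this.mono_left nhdsWithin_le_nhds
  · filter_upwards [self_mem_nhdsWithin] with ε hε
    exact mul_pos hc hε

lemma hat_add {n : ℕ} (f : ℝ → ℝ) (hf : OperatorConvexOn f) (ρ σ ρ' σ' : Matrix (Fin n) (Fin n) ℂ)
    (hρ : ρ.PosSemidef) (hσ : σ.PosSemidef) (hρ' : ρ'.PosSemidef) (hσ' : σ'.PosSemidef) :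
    hatSf f (ρ + ρ') (σ + σ') ≤ hatSf f ρ σ + hatSf f ρ' σ' := by
  obtain ⟨t1, b1⟩ := part1 f hf ρ σ hρ hσ
  obtain ⟨t2, b2⟩ := part1 f hf ρ' σ' hρ' hσ'
  obtain ⟨t3, -⟩ := part1 f hf _ _ (hρ.add hρ') (hσ.add hσ')
  have t4 := (EReal.continuousAt_add (p := (hatSf f ρ σ, hatSf f ρ' σ')) (Or.inr b2)
      (Or.inl b1)).tendsto.comp (t1.prodMk_nhds t2)
  refine le_of_tendsto_of_tendsto (t3.comp (tendsto_mul_pos (c := 2) two_pos)) t4 ?_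
  filter_upwards [self_mem_nhdsWithin] with ε hε
  have := persp_add f hf _ _ _ _ (pd_eps hρ hε) (pd_eps hρ' hε) (pd_eps hσ hε) (pd_eps hσ' hε)
  simp only [Function.comp]
  rw [← EReal.coe_add, EReal.coe_le_coe_iff]
  simp only [maxSfEps_eq, two_mul, add_smul]
  rwa [add_add_add_comm ρ, add_add_add_comm σ] at this

lemma hat_zero {n : ℕ} (f : ℝ → ℝ) : hatSf f (0 : Matrix (Fin n) (Fin n) ℂ) 0 = 0 := by
  have ht2 : Tendsto (fun ε : ℝ => ((maxSfEps f (0 : Matrix (Fin n) (Fin n) ℂ) 0 ε : ℝ) : EReal))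
      (nhdsWithin 0 (Set.Ioi 0)) (nhds ((0 : ℝ) : EReal)) := by
    refine (continuous_coe_real_ereal.tendsto 0).comp ?_
    set c := persp f (1 : Matrix (Fin n) (Fin n) ℂ) 1 with hc
    have : Tendsto (fun ε : ℝ => ε * c) (nhds 0) (nhds (0 * c)) :=
      (continuous_id.mul continuous_const).tendsto 0
    rw [zero_mul] at this
    refine (this.mono_left nhdsWithin_le_nhds).congr' ?_
    filter_upwards [self_mem_nhdsWithin] with ε hε
    rw [maxSfEps_eq, zero_add, persp_smul f _ _ Matrix.PosDef.one hε]
  exact ht2.limsup_eq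

lemma hat_smul {n : ℕ} (f : ℝ → ℝ) (hf : OperatorConvexOn f) (ρ σ : Matrix (Fin n) (Fin n) ℂ)
    (hρ : ρ.PosSemidef) (hσ : σ.PosSemidef) {c : ℝ} (hc : 0 ≤ c) :
    hatSf f (c • ρ) (c • σ) ≤ (c : EReal) * hatSf f ρ σ := by
  rcases hc.eq_or_lt with rfl | hc
  · simp [hat_zero]
  obtain ⟨t1, b1⟩ := part1 f hf ρ σ hρ hσ
  obtain ⟨t3, -⟩ := part1 f hf _ _ (hρ.smul hc.le) (hσ.smul hc.le)
  have hc0 : (c : EReal) ≠ 0 := by exact_mod_cast hc.ne'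
  have t4 := (EReal.continuousAt_mul (p := ((c : EReal), hatSf f ρ σ)) (Or.inl hc0)
    (Or.inl hc0) (Or.inl (EReal.coe_ne_bot _))
      (Or.inl (EReal.coe_ne_top _))).tendsto.comp ((tendsto_const_nhds (x := (c : EReal))).prodMk_nhds t1)
  refine le_of_tendsto_of_tendsto (t3.comp (tendsto_mul_pos hc)) t4 ?_
  filter_upwards [self_mem_nhdsWithin] with ε hε
  simp only [Function.comp]
  rw [← EReal.coe_mul, EReal.coe_le_coe_iff, maxSfEps_eq, maxSfEps_eq,
    ← persp_smul f _ _ (pd_eps hσ hε) hc, smul_add, smul_add, smul_smul]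

/-- for operator convex `f`, (1) the limit defining the maximal
`f`-divergence `Ŝ_f(ρ‖σ) = lim_{ε→0⁺} Ŝ_f(ρ+εI‖σ+εI)` exists in `(−∞, +∞]`, and
(2) `Ŝ_f` is jointly convex on pairs of positive semidefinite matrices. -/
theorem stmt11 {n : ℕ} (f : ℝ → ℝ) (hf : OperatorConvexOn f) :
    (∀ ρ σ : Matrix (Fin n) (Fin n) ℂ, ρ.PosSemidef → σ.PosSemidef →
      Filter.Tendsto (fun ε : ℝ => ((maxSfEps f ρ σ ε : ℝ) : EReal))
          (nhdsWithin 0 (Set.Ioi 0)) (nhds (hatSf f ρ σ))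
        ∧ hatSf f ρ σ ≠ ⊥) ∧
    (∀ (k : ℕ) (ρ σ : Fin k → Matrix (Fin n) (Fin n) ℂ) (lam : Fin k → ℝ),
      (∀ i, 0 ≤ lam i) → (∀ i, (ρ i).PosSemidef) → (∀ i, (σ i).PosSemidef) →
        hatSf f (∑ i, lam i • ρ i) (∑ i, lam i • σ i)
          ≤ ∑ i, ((lam i : EReal) * hatSf f (ρ i) (σ i))) := by
  refine ⟨part1 f hf, ?_⟩
  intro k ρ σ lam hl hρ hσ
  induction k with
  | zero => simp [hat_zero]
  | succ k ih =>
    rw [Fin.sum_univ_succ, Fin.sum_univ_succ, Fin.sum_univ_succ]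
    have hs : ∀ τ : Fin (k + 1) → Matrix (Fin n) (Fin n) ℂ, (∀ i, (τ i).PosSemidef) →
        (∑ i : Fin k, lam i.succ • τ i.succ).PosSemidef := fun τ hτ =>
      Matrix.posSemidef_sum _ fun i _ => (hτ i.succ).smul (hl i.succ)
    refine (hat_add f hf _ _ _ _ ((hρ 0).smul (hl 0)) ((hσ 0).smul (hl 0)) (hs ρ hρ)
      (hs σ hσ)).trans (add_le_add (hat_smul f hf _ _ (hρ 0) (hσ 0) (hl 0)) ?_)
    exact ih (fun i => ρ i.succ) (fun i => σ i.succ) (fun i => lam i.succ) (fun i => hl _)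
      (fun i => hρ _) (fun i => hσ _)
end

section
/- Let ρ, σ ∈ M_n(ℂ) be positive semidefinite with supp ρ ⊆ supp σ and ρσ ≠ σρ, and let α ∈ (1,2). Then Tr( ρ^α σ^{1−α} ) < Tr( σ^{1/2} ( σ^{−1/2} ρ σ^{−1/2} )^α σ^{1/2} ), where positive powers of positive semidefinite matrices are taken by the spectral calculus with 0^t := 0, and the negative power σ^{1−α} as well as σ^{−1/2} are taken in the Moore–Penrose sense (inverting only the nonzero eigenvalues). -/
open Matrix
open scoped ComplexOrder

lemma aux_integral {ι κ : Type*} [Fintype ι] [Fintype κ] (p u : ι → ℝ) (q v : κ → ℝ)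
    (hu : ∀ i, 0 ≤ u i) (hv : ∀ i, 0 ≤ v i) (α : ℝ) (hα1 : 1 < α) (hα2 : α < 2)
    (h : ∀ s : ℝ, 0 < s → ∑ i, p i * (u i ^ 2 / (u i + s)) < ∑ i, q i * (v i ^ 2 / (v i + s))) :
    ∑ i, p i * u i ^ α < ∑ i, q i * v i ^ α := by
  have hα : α ∈ Set.Ioo (1:ℝ) 2 := ⟨hα1, hα2⟩
  have hα' : α - 1 ∈ Set.Ioo (0:ℝ) 1 := ⟨by linarith, by linarith⟩
  set C := (∫ t in Set.Ioi 0, Real.rpowIntegrand₀₁ (α - 1) t 1)⁻¹ with hC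
  have hCpos : 0 < C := inv_pos.mpr (Real.integral_rpowIntegrand₀₁_one_pos hα')
  have key : ∀ x : ℝ, 0 ≤ x → x ^ α = C * ∫ t in Set.Ioi 0, Real.rpowIntegrand₁₂ α t x :=
    fun x hx => Real.rpow_eq_const_mul_integral_rpowIntegrand₁₂ hα hx
  have hint : ∀ x : ℝ, 0 ≤ x → MeasureTheory.Integrable (fun t => Real.rpowIntegrand₁₂ α t x)
      (MeasureTheory.volume.restrict (Set.Ioi 0)) :=
    fun x hx => Real.integrableOn_rpowIntegrand₁₂ hα hx
  have hval : ∀ t x : ℝ, 0 < t → 0 ≤ x →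
      Real.rpowIntegrand₁₂ α t x = t ^ (α - 2) * (x ^ 2 / (x + t)) := by
    intro t x ht hx
    rw [Real.rpowIntegrand₁₂_eq_mul_rpowIntegrand₀₁ hx ht,
      Real.rpowIntegrand₀₁_eq_pow_div hα' ht.le hx]
    rw [show α - 1 - 1 = α - 2 by ring, add_comm t x]
    ring
  have hl : ∑ i, p i * u i ^ α
      = C * ∫ t in Set.Ioi 0, ∑ i, p i * Real.rpowIntegrand₁₂ α t (u i) := by
    rw [MeasureTheory.integral_finsetSum _ (fun i _ => (hint _ (hu i)).const_mul _),
      Finset.mul_sum]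
    refine Finset.sum_congr rfl fun i _ => ?_
    rw [key _ (hu i), MeasureTheory.integral_const_mul]; ring
  have hr : ∑ i, q i * v i ^ α
      = C * ∫ t in Set.Ioi 0, ∑ i, q i * Real.rpowIntegrand₁₂ α t (v i) := by
    rw [MeasureTheory.integral_finsetSum _ (fun i _ => (hint _ (hv i)).const_mul _),
      Finset.mul_sum]
    refine Finset.sum_congr rfl fun i _ => ?_
    rw [key _ (hv i), MeasureTheory.integral_const_mul]; ring
  rw [hl, hr]
  refine mul_lt_mul_of_pos_left ?_ hCpos
  have hi1 : MeasureTheory.Integrable (fun t => ∑ i, p i * Real.rpowIntegrand₁₂ α t (u i))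
      (MeasureTheory.volume.restrict (Set.Ioi 0)) :=
    MeasureTheory.integrable_finsetSum _ (fun i _ => (hint _ (hu i)).const_mul _)
  have hi2 : MeasureTheory.Integrable (fun t => ∑ i, q i * Real.rpowIntegrand₁₂ α t (v i))
      (MeasureTheory.volume.restrict (Set.Ioi 0)) :=
    MeasureTheory.integrable_finsetSum _ (fun i _ => (hint _ (hv i)).const_mul _)
  have hlt : ∀ t ∈ Set.Ioi (0:ℝ), ∑ i, p i * Real.rpowIntegrand₁₂ α t (u i)
      < ∑ i, q i * Real.rpowIntegrand₁₂ α t (v i) := by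
    intro t ht
    have ht : 0 < t := ht
    have := mul_lt_mul_of_pos_left (h t ht) (Real.rpow_pos_of_pos ht (α - 2))
    rw [Finset.mul_sum, Finset.mul_sum] at this
    have g1 : ∑ i, p i * Real.rpowIntegrand₁₂ α t (u i)
        = ∑ i, t ^ (α - 2) * (p i * (u i ^ 2 / (u i + t))) :=
      Finset.sum_congr rfl fun i _ => by rw [hval t _ ht (hu i)]; ring
    have g2 : ∑ i, q i * Real.rpowIntegrand₁₂ α t (v i)
        = ∑ i, t ^ (α - 2) * (q i * (v i ^ 2 / (v i + t))) :=
      Finset.sum_congr rfl fun i _ => by rw [hval t _ ht (hv i)]; ring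
    rw [g1, g2]; exact this
  rw [← sub_pos, ← MeasureTheory.integral_sub hi2 hi1]
  rw [MeasureTheory.setIntegral_pos_iff_support_of_nonneg_ae]
  · have : Set.Ioi (0:ℝ) ⊆ (Function.support fun t => ∑ i, q i * Real.rpowIntegrand₁₂ α t (v i)
      - ∑ i, p i * Real.rpowIntegrand₁₂ α t (u i)) ∩ Set.Ioi 0 := by
      intro t ht
      exact ⟨(sub_pos.mpr (hlt t ht)).ne', ht⟩
    refine lt_of_lt_of_le ?_ (MeasureTheory.measure_mono this)
    simp
  · filter_upwards [MeasureTheory.ae_restrict_mem measurableSet_Ioi] with t ht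
    exact (sub_pos.mpr (hlt t ht)).le
  · exact hi2.sub hi1

lemma aux_spec {n : ℕ} (A : Matrix (Fin n) (Fin n) ℂ) (hA : A.PosSemidef) :
    ∃ (U : Matrix (Fin n) (Fin n) ℂ) (l : Fin n → ℝ), Uᴴ * U = 1 ∧ U * Uᴴ = 1 ∧ (∀ i, 0 ≤ l i) ∧
      A = U * diagonal (fun i => (l i : ℂ)) * Uᴴ ∧
      ∀ t : ℝ, mpow A t =
        U * diagonal (fun i => ((if l i = 0 then 0 else l i ^ t : ℝ) : ℂ)) * Uᴴ := by
  refine ⟨hA.1.eigenvectorUnitary, hA.1.eigenvalues, ?_, ?_, hA.eigenvalues_nonneg, ?_, ?_⟩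
  · exact Unitary.coe_star_mul_self _
  · exact Unitary.coe_mul_star_self _
  · exact hA.1.spectral_theorem
  · intro t
    rw [mpow, hA.1.cfc_eq]
    rfl

lemma aux_alg {n : ℕ} (ρ σ Y : Matrix (Fin n) (Fin n) ℂ) (hρ : ρᴴ = ρ) (hσ : σᴴ = σ)
    (s : ℂ) (hs : s ≠ 0)
    (hY : ρ * Y + s • (Y * σ) = ρ)
    (h1 : Y * σ = σ * Yᴴ) (h2 : Y * ρ = ρ * Y) (h3 : Y * ρ = Yᴴ * ρ)
    (hk : ∀ B : Matrix (Fin n) (Fin n) ℂ, B * Y * σ = 0 → B * Y = 0) :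
    ρ * σ = σ * ρ := by
  have hT : s • (Y * σ) = ρ - ρ * Y := by rw [eq_sub_iff_add_eq, add_comm]; exact hY
  have hN : (Y - Yᴴ) * Y = 0 := by
    apply hk
    have : s • ((Y - Yᴴ) * Y * σ) = 0 := by
      rw [Matrix.mul_assoc, ← Matrix.mul_smul, hT, ← h2]
      have h3' : (Y - Yᴴ) * ρ = 0 := by rw [Matrix.sub_mul, h3, sub_self]
      rw [h2, Matrix.mul_sub, ← Matrix.mul_assoc, h3']; simp
    exact (smul_eq_zero.mp this).resolve_left hs
  have hYY : Y * Y = Yᴴ * Y := by rwa [Matrix.sub_mul, sub_eq_zero] at hN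
  have hYY' : Yᴴ * Yᴴ = Yᴴ * Y := by
    have := congrArg conjTranspose hYY
    simpa using this
  have hsa : Y - Yᴴ = 0 := by
    rw [← Matrix.trace_conjTranspose_mul_self_eq_zero_iff]
    have : (Y - Yᴴ)ᴴ * (Y - Yᴴ) = Y * Yᴴ - Yᴴ * Y := by
      rw [conjTranspose_sub, conjTranspose_conjTranspose, Matrix.sub_mul, Matrix.mul_sub,
        Matrix.mul_sub, hYY, hYY']; abel
    rw [this, trace_sub, trace_mul_comm, sub_self]
  have hsa : Yᴴ = Y := (sub_eq_zero.mp hsa).symm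
  rw [hsa] at h1
  set K := ρ * σ - σ * ρ with hK
  have e1 : Y * K = 0 := by
    have : s • (Y * K) = 0 := by
      have a1 : s • (Y * (ρ * σ)) = ρ * (s • (Y * σ)) := by
        rw [Matrix.mul_smul, ← Matrix.mul_assoc, h2, Matrix.mul_assoc]
      have a2 : s • (Y * (σ * ρ)) = (s • (Y * σ)) * ρ := by
        rw [Matrix.smul_mul, Matrix.mul_assoc]
      rw [hK, Matrix.mul_sub, smul_sub, a1, a2, hT, Matrix.mul_sub, Matrix.sub_mul,
        Matrix.mul_assoc ρ Y ρ, h2, sub_self]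
    exact (smul_eq_zero.mp this).resolve_left hs
  have hKs : Kᴴ = -K := by
    rw [hK]; simp [hρ, hσ]
  have e2 : K * Y = 0 := by
    have := congrArg conjTranspose e1
    simpa [hKs, hsa] using this
  have e3 : K * ρ = 0 := by
    rw [← hY, ← h2, Matrix.mul_add, Matrix.mul_smul, ← Matrix.mul_assoc, ← Matrix.mul_assoc, e2]
    simp
  have e4 : ρ * K = 0 := by
    rw [← hY, h1, Matrix.add_mul, Matrix.smul_mul, Matrix.mul_assoc, Matrix.mul_assoc, e1]
    simp
  have : K = 0 := by
    rw [← Matrix.trace_conjTranspose_mul_self_eq_zero_iff, hKs, Matrix.neg_mul, trace_neg,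
      neg_eq_zero]
    have : K * K = K * ρ * σ - K * σ * ρ := by
      conv_lhs => rw [hK, Matrix.mul_sub, ← Matrix.mul_assoc, ← Matrix.mul_assoc]
    rw [this, trace_sub, e3, trace_mul_comm (K * σ), ← Matrix.mul_assoc, e4]; simp
  exact sub_eq_zero.mp this

lemma aux_trace_nonneg {n : ℕ} (B : Matrix (Fin n) (Fin n) ℂ) : 0 ≤ (B * Bᴴ).trace.re ∧
    ((B * Bᴴ).trace.re = 0 → B = 0) := by
  have h := (Matrix.posSemidef_self_mul_conjTranspose B).trace_nonneg
  have h' := Complex.nonneg_iff.mp h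
  refine ⟨h'.1, fun h0 => ?_⟩
  rw [← Matrix.trace_mul_conjTranspose_self_eq_zero_iff]
  exact Complex.ext h0 h'.2.symm

lemma aux_sos {n : ℕ} (ρ σ Y A : Matrix (Fin n) (Fin n) ℂ) (x : Fin n → ℝ) (hx : ∀ i, 0 ≤ x i)
    (hσA : σ = A * Aᴴ) (hρA : ρ = A * diagonal (fun i => (x i : ℂ)) * Aᴴ)
    (s : ℝ) (hs : 0 < s)
    (hY : ρ * Y + (s : ℂ) • (Y * σ) = ρ)
    (hk : ∀ B : Matrix (Fin n) (Fin n) ℂ, B * Y * σ = 0 → B * Y = 0)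
    (hcomm : ρ * σ ≠ σ * ρ) :
    (ρ * Y).trace.re < ∑ i, ((Aᴴ * A) i i).re * (x i ^ 2 / (x i + s)) := by
  set D : Matrix (Fin n) (Fin n) ℂ := diagonal (fun i => (x i : ℂ)) with hD
  set E : Matrix (Fin n) (Fin n) ℂ := diagonal (fun i => ((x i / (x i + s) : ℝ) : ℂ)) with hE
  set Q : Matrix (Fin n) (Fin n) ℂ := diagonal (fun i => ((√(x i) : ℝ) : ℂ)) with hQ
  have hDs : Dᴴ = D := by
    rw [hD, diagonal_conjTranspose]; congr 1; ext i; simp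
  have hEs : Eᴴ = E := by
    rw [hE, diagonal_conjTranspose]; congr 1; ext i; simp
  have hQs : Qᴴ = Q := by
    rw [hQ, diagonal_conjTranspose]; congr 1; ext i; simp
  have hQQ : Q * Q = D := by
    rw [hQ, hD, diagonal_mul_diagonal]; congr 1; ext i
    rw [← Complex.ofReal_mul, Real.mul_self_sqrt (hx i)]
  have hED : E * D = D * E := by
    rw [hE, hD, diagonal_mul_diagonal, diagonal_mul_diagonal]; congr 1; ext i; ring
  have hDE : D * E + (s : ℂ) • E = D := by
    rw [hE, hD, diagonal_mul_diagonal, ← diagonal_smul, diagonal_add]; congr 1; ext i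
    have : x i + s ≠ 0 := (add_pos_of_nonneg_of_pos (hx i) hs).ne'
    have h2 : x i * (x i / (x i + s)) + s * (x i / (x i + s)) = x i := by field_simp
    simp only [Pi.smul_apply, smul_eq_mul]
    exact_mod_cast h2
  have hG : ∑ i, ((Aᴴ * A) i i).re * (x i ^ 2 / (x i + s)) = (A * (E * D) * Aᴴ).trace.re := by
    rw [trace_mul_comm, ← Matrix.mul_assoc, hE, hD, diagonal_mul_diagonal, trace]
    simp only [diag_apply, mul_diagonal, Complex.re_sum]
    refine Finset.sum_congr rfl fun i _ => ?_
    rw [← Complex.ofReal_mul, Complex.re_mul_ofReal]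
    ring
  set B1 := Yᴴ * A - A * E with hB1
  set B2 := Y * A - A * E with hB2
  have hρs : ρᴴ = ρ := by rw [hρA]; simp [hDs, Matrix.mul_assoc]
  have hσs : σᴴ = σ := by rw [hσA]; simp
  have hid : (A * (E * D) * Aᴴ).trace - (ρ * Y).trace
      = (B1 * Q * (B1 * Q)ᴴ).trace + s * (B2 * B2ᴴ).trace := by
    have k1 : B1 * Q * (B1 * Q)ᴴ = Yᴴ * (ρ * Y) - Yᴴ * (A * (D * E) * Aᴴ)
        - A * (D * E) * Aᴴ * Y + A * (E * D * E) * Aᴴ := by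
      rw [conjTranspose_mul, hQs, show B1 * Q * (Q * B1ᴴ) = B1 * (Q * Q) * B1ᴴ by
        simp only [Matrix.mul_assoc], hQQ, hB1, hρA]
      simp only [conjTranspose_sub, conjTranspose_mul, conjTranspose_conjTranspose, hEs]
      rw [← hED]
      conv_lhs => simp only [Matrix.sub_mul, Matrix.mul_sub, Matrix.mul_assoc]
      conv_rhs => simp only [Matrix.mul_assoc]
      rw [← Matrix.mul_assoc D E Aᴴ, ← hED, Matrix.mul_assoc E D]
      abel
    have k2 : B2 * B2ᴴ = Y * σ * Yᴴ - Y * (A * E * Aᴴ) - A * E * Aᴴ * Yᴴ + A * (E * E) * Aᴴ := by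
      rw [hB2, hσA]
      simp only [conjTranspose_sub, conjTranspose_mul, conjTranspose_conjTranspose, hEs]
      simp only [Matrix.sub_mul, Matrix.mul_sub, Matrix.mul_assoc]
      abel
    have t1 : (Yᴴ * (ρ * Y)).trace + s * (Y * σ * Yᴴ).trace = (Yᴴ * ρ).trace := by
      conv_rhs => rw [← hY]
      rw [Matrix.mul_add, Matrix.mul_smul, trace_add, trace_smul, trace_mul_comm (Y * σ), smul_eq_mul]
    have t2 : (Yᴴ * (A * (D * E) * Aᴴ)).trace + s * (A * E * Aᴴ * Yᴴ).trace = (Yᴴ * ρ).trace := by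
      conv_rhs => rw [hρA, ← hDE]
      rw [Matrix.mul_add, Matrix.add_mul, Matrix.mul_add, trace_add, trace_mul_comm (A * E * Aᴴ)]
      simp [Matrix.mul_assoc]
    have t3 : (A * (D * E) * Aᴴ * Y).trace + s * (Y * (A * E * Aᴴ)).trace = (ρ * Y).trace := by
      conv_rhs => rw [hρA, ← hDE]
      rw [Matrix.mul_add, Matrix.add_mul, Matrix.add_mul, trace_add, trace_mul_comm Y]
      simp [Matrix.mul_assoc]
    have t4 : (A * (E * D * E) * Aᴴ).trace + s * (A * (E * E) * Aᴴ).trace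
        = (A * (E * D) * Aᴴ).trace := by
      conv_rhs => rw [← hDE]
      rw [Matrix.mul_add, Matrix.mul_add, Matrix.add_mul, trace_add]
      simp [Matrix.mul_assoc]
    rw [k1, k2]
    simp only [trace_add, trace_sub]
    linear_combination t2 + t3 - t1 - t4
  have hid' := congrArg Complex.re hid
  rw [Complex.sub_re, Complex.add_re, Complex.re_ofReal_mul] at hid'
  rw [hG]
  obtain ⟨n1, z1⟩ := aux_trace_nonneg (B1 * Q)
  obtain ⟨n2, z2⟩ := aux_trace_nonneg B2
  by_contra hcon
  have n2' := mul_nonneg hs.le n2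
  have q1 : B1 * Q = 0 := z1 (by linarith)
  have q2 : B2 = 0 := z2 (by
    have : s * (B2 * B2ᴴ).trace.re = 0 := by linarith
    exact (mul_eq_zero.mp this).resolve_left hs.ne')
  have q1' : Yᴴ * A * D = A * E * D := by
    have : B1 * D = 0 := by rw [← hQQ, ← Matrix.mul_assoc, q1, Matrix.zero_mul]
    rwa [hB1, Matrix.sub_mul, sub_eq_zero] at this
  have q2' : Y * A = A * E := by rwa [hB2, sub_eq_zero] at q2
  have r1 : Y * σ = A * E * Aᴴ := by rw [hσA, ← Matrix.mul_assoc, q2']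
  have r2 : Y * ρ = A * (E * D) * Aᴴ := by
    rw [hρA, ← Matrix.mul_assoc, ← Matrix.mul_assoc, q2', Matrix.mul_assoc A]
  have r3 : Yᴴ * ρ = A * (E * D) * Aᴴ := by
    rw [hρA, ← Matrix.mul_assoc, ← Matrix.mul_assoc, q1', Matrix.mul_assoc A]
  have r4 : ρ * Y = A * (E * D) * Aᴴ := by
    have := congrArg conjTranspose r3
    simpa [hρs, hEs, hDs, ← hED, Matrix.mul_assoc] using this
  have r5 : σ * Yᴴ = A * E * Aᴴ := by
    have := congrArg conjTranspose r1
    simpa [hσs, hEs, Matrix.mul_assoc] using this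
  exact hcomm (aux_alg ρ σ Y hρs hσs s (by exact_mod_cast hs.ne') hY (r1.trans r5.symm)
    (r2.trans r4.symm) (r2.trans r3.symm) hk)

lemma aux_conj {n : ℕ} (U : Matrix (Fin n) (Fin n) ℂ) (hU : Uᴴ * U = 1) (a b : Fin n → ℂ) :
    U * diagonal a * Uᴴ * (U * diagonal b * Uᴴ) = U * diagonal (fun i => a i * b i) * Uᴴ := by
  rw [← diagonal_mul_diagonal]
  calc _ = U * diagonal a * (Uᴴ * U) * diagonal b * Uᴴ := by simp only [Matrix.mul_assoc]
    _ = _ := by rw [hU]; simp only [Matrix.mul_assoc, Matrix.one_mul]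

lemma aux_conj_herm {n : ℕ} (U : Matrix (Fin n) (Fin n) ℂ) (a : Fin n → ℝ) :
    (U * diagonal (fun i => (a i : ℂ)) * Uᴴ)ᴴ = U * diagonal (fun i => (a i : ℂ)) * Uᴴ := by
  have : (diagonal (fun i => (a i : ℂ)))ᴴ = diagonal (fun i => (a i : ℂ)) := by
    rw [diagonal_conjTranspose]; congr 1; ext i; simp
  simp [this, Matrix.mul_assoc]

lemma aux_trace {n : ℕ} (M : Matrix (Fin n) (Fin n) ℂ) (a : Fin n → ℂ)
    (C : Matrix (Fin n) (Fin n) ℂ) :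
    (diagonal a * C * Mᴴ).trace = ∑ p : Fin n × Fin n, a p.1 * C p.1 p.2 * star (M p.1 p.2) := by
  rw [trace, Fintype.sum_prod_type]
  refine Finset.sum_congr rfl fun i _ => ?_
  rw [diag_apply, Matrix.mul_apply]
  simp only [diagonal_mul, conjTranspose_apply]

lemma aux_scalar1 (l m α : ℝ) (hl : 0 ≤ l) (hm : 0 ≤ m) (hα : 1 < α) (z : ℝ) :
    (if l = 0 then 0 else l ^ α) * (if m = 0 then 0 else m ^ (1 - α)) * z
      = m * z * (l / m) ^ α := by
  by_cases hm0 : m = 0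
  · simp [hm0]
  by_cases hl0 : l = 0
  · simp [hl0, Real.zero_rpow (by linarith : α ≠ 0)]
  have hm' : 0 < m := lt_of_le_of_ne hm (Ne.symm hm0)
  rw [if_neg hm0, if_neg hl0, Real.div_rpow hl hm, Real.rpow_sub hm', Real.rpow_one]
  ring

theorem stmt18 {n : ℕ} (ρ σ : Matrix (Fin n) (Fin n) ℂ)
    (hρ : ρ.PosSemidef) (hσ : σ.PosSemidef)
    (hsupp : ∀ v : Fin n → ℂ, σ *ᵥ v = 0 → ρ *ᵥ v = 0)
    (hcomm : ρ * σ ≠ σ * ρ)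
    (α : ℝ) (hα1 : 1 < α) (hα2 : α < 2) :
    (Matrix.trace (mpow ρ α * mpow σ (1 - α))).re
      < (Matrix.trace (mpow σ (1/2) *
          mpow (mpow σ (-(1/2)) * ρ * mpow σ (-(1/2))) α * mpow σ (1/2))).re := by
  have hsupp' : ∀ B : Matrix (Fin n) (Fin n) ℂ, σ * B = 0 → ρ * B = 0 := by
    intro B hB
    ext i j
    have := hsupp (fun k => B k j) (by ext a; exact congrFun (congrFun hB a) j)
    exact congrFun this i
  obtain ⟨U, l, hU1, hU2, hl, hρU, hρp⟩ := aux_spec ρ hρ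
  obtain ⟨W, m, hW1, hW2, hm, hσW, hσp⟩ := aux_spec σ hσ
  set S := mpow σ (1/2) with hS
  set R := mpow σ (-(1/2)) with hR
  have hSs : Sᴴ = S := by rw [hS, hσp]; exact aux_conj_herm W _
  have hRs : Rᴴ = R := by rw [hR, hσp]; exact aux_conj_herm W _
  have hSS : S * S = σ := by
    rw [hS, hσp, aux_conj W hW1]
    conv_rhs => rw [hσW]
    congr 3; ext i
    by_cases h : m i = 0
    · simp [h]
    · have hp : 0 < m i := lt_of_le_of_ne (hm i) (Ne.symm h)
      rw [if_neg h, ← Complex.ofReal_mul, ← Real.rpow_add hp]; norm_num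
  set P := W * diagonal (fun i => ((if m i = 0 then 0 else 1 : ℝ) : ℂ)) * Wᴴ with hP
  have hPs : Pᴴ = P := aux_conj_herm W _
  have hSR : S * R = P := by
    rw [hS, hR, hσp, hσp, aux_conj W hW1, hP]
    congr 3; ext i
    by_cases h : m i = 0
    · simp [h]
    · have hp : 0 < m i := lt_of_le_of_ne (hm i) (Ne.symm h)
      rw [if_neg h, if_neg h, if_neg h, ← Complex.ofReal_mul, ← Real.rpow_add hp]; norm_num
  have hRS : R * S = P := by
    have := congrArg conjTranspose hSR
    simpa [hSs, hRs, hPs] using this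
  have hρP : ρ * P = ρ := by
    have : ρ * (1 - P) = 0 := by
      apply hsupp'
      have hσP : σ * P = σ := by
        rw [hσW, hP, aux_conj W hW1]
        congr 3; ext i
        by_cases h : m i = 0 <;> simp [h]
      rw [Matrix.mul_sub, hσP, Matrix.mul_one, sub_self]
    rw [Matrix.mul_sub, Matrix.mul_one, sub_eq_zero] at this
    exact this.symm
  have hPρ : P * ρ = ρ := by
    have := congrArg conjTranspose hρP
    simpa [hPs, hρ.1.eq] using this
  have hX : (R * ρ * R).PosSemidef := by
    have := hρ.mul_mul_conjTranspose_same R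
    rwa [hRs] at this
  obtain ⟨V, x, hV1, hV2, hx, hXV, hXp⟩ := aux_spec _ hX
  set A := S * V with hA
  have hAs : Aᴴ = Vᴴ * S := by rw [hA, conjTranspose_mul, hSs]
  have hσA : σ = A * Aᴴ := by
    rw [hAs, hA, ← hSS]
    calc S * S = S * (V * Vᴴ) * S := by rw [hV2, Matrix.mul_one]
      _ = _ := by simp only [Matrix.mul_assoc]
  have hρA : ρ = A * diagonal (fun i => (x i : ℂ)) * Aᴴ := by
    calc ρ = P * ρ * P := by rw [hPρ, hρP]
      _ = S * (R * ρ * R) * S := by rw [← hRS]; nth_rw 1 [hRS, ← hSR]; simp only [Matrix.mul_assoc]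
      _ = S * (V * diagonal (fun i => (x i : ℂ)) * Vᴴ) * S := by rw [← hXV]
      _ = _ := by rw [hAs, hA]; simp only [Matrix.mul_assoc]
  have hrhs : (S * mpow (R * ρ * R) α * S).trace.re = ∑ i, ((Aᴴ * A) i i).re * x i ^ α := by
    rw [hXp]
    set F : Matrix (Fin n) (Fin n) ℂ :=
      diagonal (fun i => ((if x i = 0 then 0 else x i ^ α : ℝ) : ℂ)) with hF
    have : S * (V * F * Vᴴ) * S = A * F * Aᴴ := by rw [hAs, hA]; simp only [Matrix.mul_assoc]
    rw [this, trace_mul_comm, ← Matrix.mul_assoc, hF, trace]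
    simp only [diag_apply, mul_diagonal, Complex.re_sum]
    refine Finset.sum_congr rfl fun i _ => ?_
    rw [Complex.re_mul_ofReal]
    by_cases h : x i = 0
    · simp [h, Real.zero_rpow (by linarith : α ≠ 0)]
    · rw [if_neg h]
  set M := Uᴴ * W with hM
  have hMs : Mᴴ = Wᴴ * U := by rw [hM]; simp
  have hM0 : ∀ j k, m k = 0 → l j = 0 ∨ M j k = 0 := by
    intro j k hk
    have h1 : Uᴴ * ρ * W = diagonal (fun i => (l i : ℂ)) * M := by
      calc Uᴴ * ρ * W = (Uᴴ * U) * diagonal (fun i => (l i : ℂ)) * (Uᴴ * W) := by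
            conv_lhs => rw [hρU]
            simp only [Matrix.mul_assoc]
        _ = _ := by rw [hU1, Matrix.one_mul]
    have h2 : σ *ᵥ (W *ᵥ Pi.single k 1) = 0 := by
      rw [mulVec_mulVec]
      have : σ * W = W * diagonal (fun i => (m i : ℂ)) := by
        conv_lhs => rw [hσW]
        rw [Matrix.mul_assoc, hW1, Matrix.mul_one]
      rw [this, ← mulVec_mulVec]
      simp [hk]
    have h3 := hsupp _ h2
    have h4 : (Uᴴ * ρ * W) *ᵥ Pi.single k 1 = 0 := by
      rw [← mulVec_mulVec, ← mulVec_mulVec, h3, mulVec_zero]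
    rw [h1] at h4
    have h5 := congrFun h4 j
    simp [diagonal_mul] at h5
    exact h5
  have hlhs : (mpow ρ α * mpow σ (1 - α)).trace.re
      = ∑ p : Fin n × Fin n, (m p.2 * Complex.normSq (M p.1 p.2)) * (l p.1 / m p.2) ^ α := by
    rw [hρp, hσp]
    set f : Fin n → ℂ := fun i => ((if l i = 0 then 0 else l i ^ α : ℝ) : ℂ) with hf
    set g : Fin n → ℂ := fun i => ((if m i = 0 then 0 else m i ^ (1 - α) : ℝ) : ℂ) with hg
    have : (U * diagonal f * Uᴴ * (W * diagonal g * Wᴴ)).trace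
        = (diagonal f * (M * diagonal g) * Mᴴ).trace := by
      rw [hMs, hM, trace_mul_comm _ (Wᴴ * U)]
      rw [show U * diagonal f * Uᴴ * (W * diagonal g * Wᴴ)
        = (U * (diagonal f * (Uᴴ * W * diagonal g))) * Wᴴ by simp only [Matrix.mul_assoc],
        trace_mul_comm]
      simp only [Matrix.mul_assoc]
    rw [this, aux_trace, Complex.re_sum]
    refine Finset.sum_congr rfl fun p _ => ?_
    rw [← aux_scalar1 _ _ _ (hl _) (hm _) hα1, mul_diagonal]
    have e : f p.1 * (M p.1 p.2 * g p.2) * star (M p.1 p.2)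
        = f p.1 * g p.2 * (Complex.normSq (M p.1 p.2) : ℂ) := by
      rw [← Complex.mul_conj]; simp only [Complex.star_def]; ring
    rw [e, hf, hg]
    simp only [← Complex.ofReal_mul, Complex.ofReal_re]
  rw [hlhs, hrhs]
  refine aux_integral _ _ _ _ (fun p => div_nonneg (hl _) (hm _)) hx α hα1 hα2 ?_
  intro s hs
  set C : Matrix (Fin n) (Fin n) ℂ :=
    Matrix.of fun j k => ((l j / (l j + s * m k) : ℝ) : ℂ) * M j k with hC
  have hC0 : ∀ j k, m k = 0 → C j k = 0 := by
    intro j k hk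
    simp only [hC, of_apply]
    rcases hM0 j k hk with h | h <;> simp [h]
  have hCeq : diagonal (fun i => (l i : ℂ)) * C + (s : ℂ) • (C * diagonal (fun i => (m i : ℂ)))
      = diagonal (fun i => (l i : ℂ)) * M := by
    ext j k
    simp only [Matrix.add_apply, Matrix.smul_apply, diagonal_mul, mul_diagonal, hC, of_apply,
      smul_eq_mul]
    have : l j * (l j / (l j + s * m k)) + s * ((l j / (l j + s * m k)) * m k) = l j := by
      by_cases h : l j + s * m k = 0
      · have : l j = 0 := by nlinarith [hl j, mul_nonneg hs.le (hm k)]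
        simp [this]
      · field_simp
    have this' : (l j : ℂ) * ((l j / (l j + s * m k) : ℝ) : ℂ)
      + s * (((l j / (l j + s * m k) : ℝ) : ℂ) * m k) = l j := by exact_mod_cast this
    linear_combination M j k * this'
  set Y := U * C * Wᴴ with hYdef
  have hY : ρ * Y + (s : ℂ) • (Y * σ) = ρ := by
    have y1 : ρ * Y = U * (diagonal (fun i => (l i : ℂ)) * C) * Wᴴ := by
      calc ρ * Y = U * diagonal (fun i => (l i : ℂ)) * (Uᴴ * U) * C * Wᴴ := by
            conv_lhs => rw [hρU]
            rw [hYdef]; simp only [Matrix.mul_assoc]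
        _ = _ := by rw [hU1]; simp only [Matrix.mul_assoc, Matrix.one_mul]
    have y2 : Y * σ = U * (C * diagonal (fun i => (m i : ℂ))) * Wᴴ := by
      calc Y * σ = U * C * (Wᴴ * W) * diagonal (fun i => (m i : ℂ)) * Wᴴ := by
            conv_lhs => rw [hσW]
            rw [hYdef]; simp only [Matrix.mul_assoc]
        _ = _ := by rw [hW1]; simp only [Matrix.mul_assoc, Matrix.one_mul]
    rw [y1, y2, ← Matrix.smul_mul, ← Matrix.mul_smul, ← Matrix.add_mul, ← Matrix.mul_add, hCeq, hM]
    calc _ = U * diagonal (fun i => (l i : ℂ)) * Uᴴ * (W * Wᴴ) := by simp only [Matrix.mul_assoc]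
      _ = ρ := by rw [hW2, Matrix.mul_one, ← hρU]
  have hk : ∀ B : Matrix (Fin n) (Fin n) ℂ, B * Y * σ = 0 → B * Y = 0 := by
    intro B hB
    have b1 : B * U * C * diagonal (fun i => (m i : ℂ)) = 0 := by
      calc _ = B * U * C * (Wᴴ * W) * diagonal (fun i => (m i : ℂ)) * (Wᴴ * W) := by
            rw [hW1, Matrix.mul_one, Matrix.mul_one]
        _ = B * Y * (W * diagonal (fun i => (m i : ℂ)) * Wᴴ) * W := by
            rw [hYdef]; simp only [Matrix.mul_assoc]
        _ = 0 := by rw [← hσW, hB, Matrix.zero_mul]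
    have b2 : B * U * C = 0 := by
      ext i k
      by_cases h : m k = 0
      · rw [Matrix.mul_apply]
        exact Finset.sum_eq_zero fun j _ => by rw [hC0 j k h, mul_zero]
      · have := congrFun (congrFun b1 i) k
        rw [mul_diagonal] at this
        exact (mul_eq_zero.mp this).resolve_right (by exact_mod_cast h)
    rw [hYdef, ← Matrix.mul_assoc, ← Matrix.mul_assoc, b2, Matrix.zero_mul]
  have hmain := aux_sos ρ σ Y A x hx hσA hρA s hs hY hk hcomm
  refine lt_of_eq_of_lt ?_ hmain
  have tr : (ρ * Y).trace = (diagonal (fun i => (l i : ℂ)) * C * Mᴴ).trace := by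
    calc (ρ * Y).trace = (U * (diagonal (fun i => (l i : ℂ)) * (Uᴴ * U) * C * Wᴴ)).trace := by
          conv_lhs => rw [hρU]
          rw [hYdef]; simp only [Matrix.mul_assoc]
      _ = _ := by
        rw [trace_mul_comm, hU1, hMs]; simp only [Matrix.mul_assoc, Matrix.one_mul]
  rw [tr, aux_trace, Complex.re_sum]
  refine Finset.sum_congr rfl fun p _ => ?_
  have e : (l p.1 : ℂ) * C p.1 p.2 * star (M p.1 p.2)
      = ((l p.1 * (l p.1 / (l p.1 + s * m p.2)) * Complex.normSq (M p.1 p.2) : ℝ) : ℂ) := by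
    rw [Complex.ofReal_mul, ← Complex.mul_conj, Complex.ofReal_mul]
    simp only [hC, of_apply, Complex.star_def]; ring
  rw [e, Complex.ofReal_re]
  by_cases h : m p.2 = 0
  · rcases hM0 p.1 p.2 h with h' | h' <;> simp [h, h']
  · have hp : 0 < m p.2 := lt_of_le_of_ne (hm _) (Ne.symm h)
    have h1 : l p.1 + s * m p.2 ≠ 0 := (add_pos_of_nonneg_of_pos (hl _) (mul_pos hs hp)).ne'
    have h2 : l p.1 / m p.2 + s ≠ 0 :=
      (add_pos_of_nonneg_of_pos (div_nonneg (hl _) hp.le) hs).ne'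
    field_simp
end
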